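/- arXiv:1606.02803 — 2 statements merged into one kernel-verified Lean document; each statement's English description precedes it below -/
import Mathlib

section
/- Let n ≥ 1 be an integer and let H be a finite subgroup of GL(Fin n, ℚ). Then the order of H divides 2^{a(n)} · ∏_{odd primes p ≤ n+1} p^{b(n,p)}, where a(n) := n + 2·⌊n/2⌋ + ∑_{i≥2} ⌊n/2^i⌋ and b(n,p) := ∑_{i≥0} ⌊n/((p-1)·p^i)⌋. -/
open Matrix

/-- Reduction modulo a large prime: the order of `H` divides that of `GL(n, 𝔽_l)`. -/
lemma mink_reduction (n : ℕ) (H : Subgroup (GL (Fin n) ℚ)) [Finite H] :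
    ∃ N : ℕ, ∀ l : ℕ, N < l → l.Prime →
      Nat.card H ∣ ∏ i ∈ Finset.range n, (l ^ n - l ^ i) := by
  classical
  have _ := Fintype.ofFinite H
  let A : H → Fin n → Fin n → ℚ := fun h i j => ((h : GL (Fin n) ℚ) : Matrix (Fin n) (Fin n) ℚ) i j
  let B : H → Fin n → Fin n → ℚ := fun h i j => (A h i j - (1 : Matrix (Fin n) (Fin n) ℚ) i j)⁻¹
  refine ⟨∑ h : H, ∑ i, ∑ j, ((A h i j).den + (B h i j).den), fun l hl hlp => ?_⟩
  have : Fact l.Prime := ⟨hlp⟩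
  have hle : ∀ h i j, (A h i j).den + (B h i j).den < l := by
    intro h i j
    refine lt_of_le_of_lt ?_ hl
    calc (A h i j).den + (B h i j).den ≤ ∑ j, ((A h i j).den + (B h i j).den) :=
          Finset.single_le_sum (f := fun j => (A h i j).den + (B h i j).den)
            (fun _ _ => Nat.zero_le _) (Finset.mem_univ j)
      _ ≤ ∑ i, ∑ j, ((A h i j).den + (B h i j).den) :=
          Finset.single_le_sum (f := fun i => ∑ j, ((A h i j).den + (B h i j).den))
            (fun _ _ => Nat.zero_le _) (Finset.mem_univ i)
      _ ≤ _ := Finset.single_le_sum (f := fun h => ∑ i, ∑ j, ((A h i j).den + (B h i j).den))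
            (fun _ _ => Nat.zero_le _) (Finset.mem_univ h)
  have hA : ∀ h i j, ‖((A h i j : ℚ) : ℚ_[l])‖ ≤ 1 := fun h i j =>
    Padic.norm_rat_le_one fun hd => by
      have := Nat.le_of_dvd (A h i j).den_pos hd
      have := hle h i j
      omega
  have hB : ∀ h i j, ‖((B h i j : ℚ) : ℚ_[l])‖ ≤ 1 := fun h i j =>
    Padic.norm_rat_le_one fun hd => by
      have := Nat.le_of_dvd (B h i j).den_pos hd
      have := hle h i j
      omega
  let F : H → Matrix (Fin n) (Fin n) ℤ_[l] := fun h i j => ⟨(A h i j : ℚ), hA h i j⟩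
  have hF : ∀ h i j, ((F h i j : ℤ_[l]) : ℚ_[l]) = (A h i j : ℚ) := fun _ _ _ => rfl
  let f : H →* Matrix (Fin n) (Fin n) ℤ_[l] :=
    { toFun := F
      map_one' := by
        ext i j
        apply Subtype.ext
        rw [hF]
        by_cases hij : i = j <;> simp [A, Matrix.one_apply, hij]
      map_mul' := by
        intro a b
        ext i j
        apply Subtype.ext
        rw [hF, Matrix.mul_apply, PadicInt.coe_sum]
        simp [A, Matrix.mul_apply, hF] }
  have hf : ∀ h, f h = F h := fun _ => rfl
  let g : H →* GL (Fin n) (ZMod l) :=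
    MonoidHom.toHomUnits (((PadicInt.toZMod (p := l)).mapMatrix.toMonoidHom).comp f)
  have hg : Function.Injective g := by
    rw [injective_iff_map_eq_one]
    intro h hh
    have h1 : (PadicInt.toZMod (p := l)).mapMatrix (f h) = 1 := by
      have := congrArg (fun u : GL (Fin n) (ZMod l) => (u : Matrix (Fin n) (Fin n) (ZMod l))) hh
      simpa [g] using this
    apply Subtype.ext
    apply Units.ext
    ext i j
    have h2 : PadicInt.toZMod (f h i j - (1 : Matrix (Fin n) (Fin n) ℤ_[l]) i j) = 0 := by
      have := congrFun (congrFun h1 i) j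
      rw [map_sub, sub_eq_zero]
      rw [RingHom.mapMatrix_apply, Matrix.map_apply] at this
      rw [this]
      by_cases hij : i = j <;> simp [Matrix.one_apply, hij]
    rw [← RingHom.mem_ker, PadicInt.ker_toZMod, IsLocalRing.mem_maximalIdeal,
      PadicInt.mem_nonunits, PadicInt.norm_def] at h2
    have h3 : ((f h i j - (1 : Matrix (Fin n) (Fin n) ℤ_[l]) i j : ℤ_[l]) : ℚ_[l])
        = ((A h i j - (1 : Matrix (Fin n) (Fin n) ℚ) i j : ℚ) : ℚ_[l]) := by
      by_cases hij : i = j <;> simp [hf, hF, Matrix.one_apply, hij]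
    rw [h3] at h2
    have h4 := hB h i j
    by_contra hne
    have hq : A h i j - (1 : Matrix (Fin n) (Fin n) ℚ) i j ≠ 0 := sub_ne_zero.2 hne
    simp only [B, Rat.cast_inv, norm_inv] at h4
    have hpos : 0 < ‖((A h i j - (1 : Matrix (Fin n) (Fin n) ℚ) i j : ℚ) : ℚ_[l])‖ :=
      norm_pos_iff.2 (by exact_mod_cast hq)
    have := (inv_le_one₀ hpos).1 h4
    linarith
  have := Subgroup.card_dvd_of_injective g hg
  rwa [Matrix.card_GL_field, ZMod.card, Fin.prod_univ_eq_prod_range (fun i => l ^ n - l ^ i)] at this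

lemma mink_val (p l n : ℕ) [hp : Fact p.Prime] (hl : l.Prime) (hpl : p ≠ l) :
    padicValNat p (∏ i ∈ Finset.range n, (l ^ n - l ^ i)) =
      ∑ j ∈ Finset.range n, padicValNat p (l ^ (j + 1) - 1) := by
  have hne : ∀ k, 0 < k → l ^ k - 1 ≠ 0 := fun k hk => by
    have := Nat.one_lt_pow hk.ne' hl.one_lt
    omega
  have e : ∀ i ∈ Finset.range n, l ^ n - l ^ i = l ^ i * (l ^ (n - 1 - i + 1) - 1) := by
    intro i hi
    rw [Finset.mem_range] at hi
    rw [Nat.mul_sub, mul_one, ← pow_add]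
    congr 2
    omega
  rw [Finset.prod_congr rfl e, ← Nat.factorization_def _ hp.out, Nat.factorization_prod,
    Finsupp.finsetSum_apply, ← Finset.sum_range_reflect (fun j => padicValNat p (l ^ (j + 1) - 1))]
  · refine Finset.sum_congr rfl fun i hi => ?_
    have h0 : l ^ i ≠ 0 := pow_ne_zero _ hl.ne_zero
    rw [Nat.factorization_def _ hp.out, padicValNat.mul h0 (hne _ (Nat.succ_pos _)),
      padicValNat.eq_zero_of_not_dvd, zero_add]
    intro hd
    exact hpl ((Nat.prime_dvd_prime_iff_eq hp.out hl).1 (hp.out.dvd_of_dvd_pow hd))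
  · intro i _
    exact mul_ne_zero (pow_ne_zero _ hl.ne_zero) (hne _ (Nat.succ_pos _))

lemma mink_two_val (l j : ℕ) (hl : l % 8 = 3) (hj : j ≠ 0) :
    padicValNat 2 (l ^ j - 1) = 1 + padicValNat 2 j + if 2 ∣ j then 1 else 0 := by
  have : Fact (Nat.Prime 2) := ⟨Nat.prime_two⟩
  have v1 : ∀ m, m % 4 = 2 → padicValNat 2 m = 1 := by
    intro m hm
    obtain ⟨k, rfl⟩ : ∃ k, m = 2 * k := ⟨m / 2, by omega⟩
    rw [padicValNat.mul (by omega) (by omega), padicValNat.self (by omega),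
      padicValNat.eq_zero_of_not_dvd (by omega)]
  split_ifs with h
  · have h1 := padicValNat.pow_two_sub_pow (x := l) (y := 1) (by omega) (by omega) (by omega) hj
      (even_iff_two_dvd.2 h)
    rw [one_pow, v1 (l - 1) (by omega)] at h1
    have h2 : padicValNat 2 (l + 1) = 2 := by
      obtain ⟨k, hk⟩ : ∃ k, l + 1 = 2 * k := ⟨(l + 1) / 2, by omega⟩
      rw [hk, padicValNat.mul (by omega) (by omega), padicValNat.self (by omega),
        v1 k (by omega)]
    omega
  · rw [padicValNat.eq_zero_of_not_dvd h, v1]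
    obtain ⟨k, rfl⟩ : ∃ k, j = 2 * k + 1 := ⟨j / 2, by omega⟩
    have : l ^ (2 * k + 1) % 4 = 3 := by
      rw [pow_succ, pow_mul, Nat.mul_mod, Nat.pow_mod, Nat.pow_mod l 2,
        show l % 4 = 3 by omega]
      simp
    omega

lemma mink_two_sum (l n : ℕ) (hl : l % 8 = 3) :
    ∑ j ∈ Finset.range n, padicValNat 2 (l ^ (j + 1) - 1) =
      n + n / 2 + padicValNat 2 n.factorial := by
  have : Fact (Nat.Prime 2) := ⟨Nat.prime_two⟩
  induction n with
  | zero => simp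
  | succ n ih =>
    rw [Finset.sum_range_succ, ih, mink_two_val l (n + 1) hl (by omega), Nat.factorial_succ,
      padicValNat.mul (by omega) (Nat.factorial_ne_zero n), Nat.succ_div]
    omega

lemma mink_odd_val (p l c j : ℕ) [hp : Fact p.Prime] (hodd : Odd p)
    (hc : c < p) (hl : 1 < l) (h1 : ∀ k, p ∣ l ^ k - 1 ↔ c ∣ k)
    (h2 : ¬ p ^ 2 ∣ l ^ c - 1) (hpl : ¬ p ∣ l) (hj : j ≠ 0) :
    padicValNat p (l ^ j - 1) = if c ∣ j then 1 + padicValNat p (j / c) else 0 := by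
  split_ifs with h
  · obtain ⟨m, rfl⟩ := h
    have hc0 : c ≠ 0 := by rintro rfl; simp at hj
    have hm : m ≠ 0 := by rintro rfl; simp at hj
    rw [Nat.mul_div_cancel_left _ (Nat.pos_of_ne_zero hc0), pow_mul]
    have h3 : 1 < l ^ c := Nat.one_lt_pow hc0 hl
    have := padicValNat.pow_sub_pow hodd h3 ((h1 c).2 dvd_rfl)
      (fun hd => hpl (hp.out.dvd_of_dvd_pow hd)) hm
    rw [one_pow] at this
    rw [this]
    congr 1
    have hge : 1 ≤ padicValNat p (l ^ c - 1) :=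
      one_le_padicValNat_of_dvd (by omega) ((h1 c).2 dvd_rfl)
    have hlt : ¬ 2 ≤ padicValNat p (l ^ c - 1) := fun h =>
      h2 ((padicValNat_dvd_iff_le (by omega)).2 h)
    omega
  · exact padicValNat.eq_zero_of_not_dvd fun hd => h ((h1 j).1 hd)

lemma mink_odd_sum (p l c n : ℕ) [hp : Fact p.Prime] (hodd : Odd p)
    (hc : c < p) (hl : 1 < l) (h1 : ∀ k, p ∣ l ^ k - 1 ↔ c ∣ k)
    (h2 : ¬ p ^ 2 ∣ l ^ c - 1) (hpl : ¬ p ∣ l) :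
    ∑ j ∈ Finset.range n, padicValNat p (l ^ (j + 1) - 1) =
      n / c + padicValNat p (n / c).factorial := by
  induction n with
  | zero => simp
  | succ n ih =>
    rw [Finset.sum_range_succ, ih, mink_odd_val p l c (n + 1) hodd hc hl h1 h2 hpl (by omega),
      Nat.succ_div]
    split_ifs with h
    · rw [Nat.factorial_succ, padicValNat.mul (Nat.add_one_ne_zero _) (Nat.factorial_ne_zero _)]
      omega
    · simp

/-- A prime which is a primitive root modulo `p ^ 2`. -/
lemma mink_prime (p N : ℕ) [hp : Fact p.Prime] (hodd : Odd p) :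
    ∃ l > N, l.Prime ∧ (∀ k, p ∣ l ^ k - 1 ↔ (p - 1) ∣ k) ∧
      ¬ p ^ 2 ∣ l ^ (p - 1) - 1 ∧ ¬ p ∣ l := by
  have hp2 : p ≠ 2 := by rintro rfl; exact absurd hodd (by decide)
  have hp1 := hp.out.one_lt
  have : NeZero (p ^ 2) := ⟨pow_ne_zero _ hp.out.ne_zero⟩
  have := ZMod.isCyclic_units_of_prime_pow p hp.out hp2 2
  obtain ⟨u, hu⟩ := IsCyclic.exists_ofOrder_eq_natCard (α := (ZMod (p ^ 2))ˣ)
  rw [Nat.card_eq_fintype_card, ZMod.card_units_eq_totient,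
    Nat.totient_prime_pow hp.out (by norm_num)] at hu
  simp only [Nat.add_one_sub_one, pow_one] at hu
  obtain ⟨l, hlN, hl, hlu⟩ := Nat.forall_exists_prime_gt_and_eq_mod u.isUnit N
  have hpos : ∀ k, 1 ≤ l ^ k := fun k => Nat.one_le_pow _ _ hl.pos
  have key : ∀ k, p ^ 2 ∣ l ^ k - 1 ↔ p * (p - 1) ∣ k := by
    intro k
    rw [← hu, orderOf_dvd_iff_pow_eq_one, ← ZMod.natCast_eq_zero_iff,
      Nat.cast_sub (hpos k), sub_eq_zero, Nat.cast_pow, hlu, Units.ext_iff]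
    simp
  have hpl : ¬ p ∣ l := by
    intro hd
    have h := (key (p * (p - 1))).2 dvd_rfl
    have h3 : p ∣ l ^ (p * (p - 1)) - 1 := (dvd_pow_self p two_ne_zero).trans h
    have h4 : p ∣ l ^ (p * (p - 1)) :=
      hd.trans (dvd_pow_self l (mul_ne_zero hp.out.ne_zero (by omega)))
    have h5 := (Nat.dvd_sub_iff_right (hpos _) h4).1 h3
    exact hp.out.one_lt.ne' (Nat.dvd_one.1 h5)
  have hcast : ∀ k, p ∣ l ^ k - 1 ↔ (l : ZMod p) ^ k = 1 := by
    intro k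
    rw [← ZMod.natCast_eq_zero_iff, Nat.cast_sub (hpos k), sub_eq_zero, Nat.cast_pow, Nat.cast_one]
  refine ⟨l, hlN, hl, fun k => ⟨fun h => ?_, fun h => ?_⟩, fun h => ?_, hpl⟩
  · have h3 : p ^ 2 ∣ l ^ (p * k) - 1 := by
      have h6 := dvd_sub_pow_of_dvd_sub (R := ℤ) (p := p) (a := (l : ℤ) ^ k) (b := 1)
        (by have := Int.natCast_dvd_natCast.2 h
            rwa [Nat.cast_sub (hpos k), Nat.cast_pow, Nat.cast_one] at this) 1
      rw [← Int.natCast_dvd_natCast, Nat.cast_sub (hpos _)]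
      push_cast
      rw [mul_comm p k, pow_mul]
      simpa using h6
    exact Nat.dvd_of_mul_dvd_mul_left hp.out.pos ((key _).1 h3)
  · rw [hcast]
    obtain ⟨m, rfl⟩ := h
    rw [pow_mul, ZMod.pow_card_sub_one_eq_one, one_pow]
    rwa [Ne, ZMod.natCast_eq_zero_iff]
  · have := Nat.le_of_dvd (by omega) ((key _).1 h)
    have h7 : 2 * (p - 1) ≤ p * (p - 1) := Nat.mul_le_mul_right _ (by omega)
    omega

lemma mink_two_bound (n : ℕ) (H : Subgroup (GL (Fin n) ℚ)) [Finite H] (k : ℕ)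
    (hk : 2 ^ k ∣ Nat.card H) :
    k ≤ n + 2 * (n / 2) + ∑ i ∈ Finset.range (n + 1), n / 2 ^ (i + 2) := by
  have : Fact (Nat.Prime 2) := ⟨Nat.prime_two⟩
  obtain ⟨N, hN⟩ := mink_reduction n H
  obtain ⟨l, hlN, hl, hl3⟩ := Nat.forall_exists_prime_gt_and_eq_mod (q := 8) (a := 3)
    (by decide) N
  have hl8 : l % 8 = 3 := by
    have := (ZMod.natCast_eq_natCast_iff l 3 8).1 (by exact_mod_cast hl3)
    simpa [Nat.ModEq] using this
  have h := hk.trans (hN l hlN hl)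
  rw [padicValNat_dvd_iff_le, mink_val 2 l n hl (by rintro rfl; omega), mink_two_sum l n hl8,
    padicValNat_factorial (b := n + 3) (by have := Nat.log_le_self 2 n; omega)] at h
  · have e : ∑ i ∈ Finset.Ico 1 (n + 3), n / 2 ^ i
        = n / 2 + ∑ i ∈ Finset.range (n + 1), n / 2 ^ (i + 2) := by
      rw [Finset.sum_Ico_eq_sum_range, show n + 3 - 1 = (n + 1) + 1 by omega,
        Finset.sum_range_succ', add_comm]
      congr 1
      exact Finset.sum_congr rfl fun i _ => by rw [show 1 + (i + 1) = i + 2 by ring]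
    omega
  · refine Finset.prod_ne_zero_iff.2 fun i hi => ?_
    have := Nat.pow_lt_pow_right hl.one_lt (Finset.mem_range.1 hi)
    omega

lemma mink_odd_bound (n : ℕ) (H : Subgroup (GL (Fin n) ℚ)) [Finite H] (p k : ℕ)
    (hp : p.Prime) (hodd : Odd p) (hk : p ^ k ∣ Nat.card H) :
    k ≤ ∑ i ∈ Finset.range (n + 1), n / ((p - 1) * p ^ i) := by
  have : Fact p.Prime := ⟨hp⟩
  obtain ⟨N, hN⟩ := mink_reduction n H
  obtain ⟨l, hlN, hl, h1, h2, hpl⟩ := mink_prime p N hodd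
  have h := hk.trans (hN l hlN hl)
  rw [padicValNat_dvd_iff_le, mink_val p l n hl (by rintro rfl; exact hpl dvd_rfl),
    mink_odd_sum p l (p - 1) n hodd (by have := hp.pos; omega) hl.one_lt h1 h2 hpl,
    padicValNat_factorial (b := n + 1)
      (by have := Nat.log_le_self p (n / (p - 1))
          have := Nat.div_le_self n (p - 1)
          omega)] at h
  · refine h.trans (le_of_eq ?_)
    rw [Finset.sum_Ico_eq_sum_range, Nat.add_sub_cancel, Finset.sum_range_succ', add_comm]
    simp only [pow_zero, mul_one]
    congr 1
    exact Finset.sum_congr rfl fun i _ => by rw [Nat.div_div_eq_div_mul, add_comm]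
  · refine Finset.prod_ne_zero_iff.2 fun i hi => ?_
    have := Nat.pow_lt_pow_right hl.one_lt (Finset.mem_range.1 hi)
    omega

/-- Minkowski's divisibility bound (Definition 3.1 with Remark 3.4): the order of any
finite subgroup of `GL(n, ℚ)` divides
`2^{n + 2⌊n/2⌋ + ∑_{i≥2}⌊n/2^i⌋} · ∏_{odd primes p ≤ n+1} p^{∑_{i≥0}⌊n/((p-1)p^i)⌋}`. -/
theorem finite_subgroup_GL_rat_card_dvd
    (n : ℕ) (hn : 1 ≤ n) (H : Subgroup (GL (Fin n) ℚ)) [Finite H] :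
    Nat.card H ∣
      2 ^ (n + 2 * (n / 2) + ∑ i ∈ Finset.range (n + 1), n / 2 ^ (i + 2)) *
        ∏ p ∈ (Finset.range (n + 2)).filter (fun p => p.Prime ∧ Odd p),
          p ^ (∑ i ∈ Finset.range (n + 1), n / ((p - 1) * p ^ i)) := by
  rw [Nat.dvd_iff_prime_pow_dvd_dvd]
  intro p k hp hk
  rcases hp.eq_two_or_odd' with rfl | hodd
  · exact (pow_dvd_pow 2 (mink_two_bound n H k hk)).trans (dvd_mul_right _ _)
  · have hb := mink_odd_bound n H p k hp hodd hk
    by_cases hpn : p < n + 2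
    · refine dvd_mul_of_dvd_right ((pow_dvd_pow p hb).trans ?_) _
      exact Finset.dvd_prod_of_mem
        (fun p => p ^ (∑ i ∈ Finset.range (n + 1), n / ((p - 1) * p ^ i)))
        (Finset.mem_filter.2 ⟨Finset.mem_range.2 hpn, hp, hodd⟩)
    · have h0 : ∑ i ∈ Finset.range (n + 1), n / ((p - 1) * p ^ i) = 0 := by
        refine Finset.sum_eq_zero fun i _ => Nat.div_eq_of_lt ?_
        have : p - 1 ≤ (p - 1) * p ^ i := Nat.le_mul_of_pos_right _ (pow_pos hp.pos i)
        omega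
      have hk0 : k = 0 := by omega
      simp [hk0]
end

section
/- Let g ≥ 1 be an integer and let H be a finite subgroup of the symplectic group Sp(2g, ℚ) of 2g × 2g rational matrices preserving the standard symplectic form. Then the order of H divides 2^{c(g)} · ∏_{odd primes p ≤ 2g+1} p^{d(g,p)}, where c(g) := 2g + ∑_{i≥1} ⌊g/2^i⌋ and d(g,p) := ∑_{i≥0} ⌊2g/((p-1)·p^i)⌋. -/
section
open Polynomial

def GoodPoly (p : ℕ) (f : ℚ[X]) : Prop :=
  ∃ k : ℕ, (f.natDegree : ℚ) + f.nextCoeff = p * k ∧ k * (p - 1) ≤ f.natDegree ∧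
    (k = 0 → f = (X - 1) ^ f.natDegree)

lemma GoodPoly.mul {p : ℕ} {f h : ℚ[X]} (mf : f.Monic) (mh : h.Monic)
    (hf : GoodPoly p f) (hh : GoodPoly p h) : GoodPoly p (f * h) := by
  obtain ⟨k, h1, h2, h3⟩ := hf
  obtain ⟨l, h4, h5, h6⟩ := hh
  refine ⟨k + l, ?_, ?_, ?_⟩
  · rw [mf.natDegree_mul mh, mf.nextCoeff_mul mh]; push_cast; linarith
  · rw [mf.natDegree_mul mh, add_mul]; omega
  · intro hkl
    rw [mf.natDegree_mul mh, pow_add, ← h3 (by omega), ← h6 (by omega)]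

lemma goodPoly_cyclotomic {p : ℕ} (hp : p.Prime) (i : ℕ) :
    GoodPoly p (cyclotomic (p ^ i) ℚ) := by
  have hp2 := hp.two_le
  rcases i with _ | i
  · refine ⟨0, ?_, ?_, ?_⟩
    · have h1 : (X - 1 : ℚ[X]).natDegree = 1 := by simpa using natDegree_X_sub_C (1:ℚ)
      have h2 : (X - 1 : ℚ[X]).nextCoeff = -1 := by simpa using nextCoeff_X_sub_C (1:ℚ)
      rw [pow_zero, cyclotomic_one, h1, h2]
      simp
    · simp
    · intro _
      have : (X - 1 : ℚ[X]).natDegree = 1 := by simpa using natDegree_X_sub_C (1:ℚ)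
      rw [pow_zero, cyclotomic_one, this, pow_one]
  · have hdeg : (cyclotomic (p ^ (i+1)) ℚ).natDegree = p ^ i * (p - 1) := by
      rw [natDegree_cyclotomic, Nat.totient_prime_pow hp (by omega)]; simp
    have hpos : 0 < p ^ i := by positivity
    have hpos' : 0 < p ^ i * (p - 1) := Nat.mul_pos hpos (by omega)
    have hnext : (cyclotomic (p ^ (i+1)) ℚ).nextCoeff = if i = 0 then 1 else 0 := by
      rw [nextCoeff_of_natDegree_pos (by omega), hdeg, cyclotomic_prime_pow_eq_geom_sum hp,
        finsetSum_coeff]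
      simp_rw [← pow_mul, coeff_X_pow]
      split_ifs with h
      · subst h
        simp only [pow_zero, one_mul]
        rw [Finset.sum_eq_single (p - 1 - 1)]
        · simp
        · intro b _ hb; rw [if_neg]; omega
        · intro h; simp at h; omega
      · apply Finset.sum_eq_zero
        intro j hj
        rw [if_neg]
        intro hE
        have h1 : p ^ i ∣ p ^ i * (p - 1) - 1 := hE ▸ dvd_mul_right _ _
        have h2 : p ^ i ∣ 1 := by
          have := Nat.dvd_sub (dvd_mul_right (p ^ i) (p - 1)) h1
          rwa [show p ^ i * (p - 1) - (p ^ i * (p - 1) - 1) = 1 by omega] at this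
        have h3 : p ^ i = 1 := Nat.dvd_one.mp h2
        have := Nat.one_lt_pow h hp.one_lt
        omega
    rcases i with _ | i
    · refine ⟨1, ?_, ?_, ?_⟩
      · rw [hnext, hdeg]; push_cast [Nat.cast_sub hp.one_le]; simp
      · rw [hdeg]; simp
      · simp
    · refine ⟨p ^ i * (p - 1), ?_, ?_, ?_⟩
      · rw [hnext, hdeg]; push_cast; simp; ring
      · rw [hdeg, pow_succ]
        exact Nat.mul_le_mul (Nat.mul_le_mul le_rfl (by omega)) le_rfl
      · intro h
        have := Nat.mul_pos (show 0 < p ^ i by positivity) (show 0 < p - 1 by omega)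
        omega

lemma goodPoly_of_dvd_pow {p : ℕ} (hp : p.Prime) (m N : ℕ) :
    ∀ (d : ℕ) (f : ℚ[X]), f.natDegree = d → f.Monic → f ∣ (X ^ (p ^ m) - 1) ^ N → GoodPoly p f := by
  intro d
  induction d using Nat.strong_induction_on with
  | _ d ih =>
  intro f hd mf hf
  by_cases h0 : f = 1
  · subst h0
    exact ⟨0, by simp [nextCoeff], by simp, by simp⟩
  · have hnu : ¬ IsUnit f := fun h => h0 (mf.isUnit_iff.mp h)
    obtain ⟨q, mq, hq, hqf⟩ := exists_monic_irreducible_factor f hnu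
    have hqp : q ∣ X ^ (p ^ m) - 1 := hq.prime.dvd_of_dvd_pow (hqf.trans hf)
    rw [← prod_cyclotomic_eq_X_pow_sub_one (by have := hp.pos; positivity), hq.prime.dvd_finsetProd_iff] at hqp
    obtain ⟨e, he, hqe⟩ := hqp
    obtain ⟨i, -, rfl⟩ := (Nat.dvd_prime_pow hp).mp (Nat.dvd_of_mem_divisors he)
    have hE : q = cyclotomic (p ^ i) ℚ :=
      eq_of_monic_of_associated mq (cyclotomic.monic _ _)
        (hq.associated_of_dvd (cyclotomic.irreducible_rat (by have := hp.pos; positivity)) hqe)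
    obtain ⟨r, rfl⟩ := hqf
    have mr : r.Monic := mq.of_mul_monic_left mf
    refine GoodPoly.mul mq mr (hE ▸ goodPoly_cyclotomic hp i) (ih _ ?_ r rfl mr ((dvd_mul_left _ _).trans hf))
    rw [mq.natDegree_mul mr] at hd
    have := hq.natDegree_pos
    omega

lemma matrix_charpoly_dvd_of_pow {ι : Type*} [Fintype ι] [DecidableEq ι] (A : Matrix ι ι ℚ) (N : ℕ)
    (hA : A ^ N = 1) : A.charpoly ∣ (X ^ N - 1) ^ (Fintype.card ι) := by
  have hc : Commute (Matrix.scalar ι (X : ℚ[X])) ((C : ℚ →+* ℚ[X]).mapMatrix A) :=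
    Matrix.scalar_commute _ (fun _ => Commute.all _ _) _
  obtain ⟨D, hD⟩ := hc.sub_dvd_pow_sub_pow N
  have h2 : (Matrix.scalar ι (X : ℚ[X])) ^ N - ((C : ℚ →+* ℚ[X]).mapMatrix A) ^ N
      = Matrix.scalar ι (X ^ N - 1 : ℚ[X]) := by
    rw [← map_pow, ← map_pow, hA, map_one, map_sub, map_one]
  rw [h2] at hD
  have h3 := congrArg Matrix.det hD
  rw [Matrix.det_mul] at h3
  refine ⟨D.det, ?_⟩
  rw [Matrix.charpoly, Matrix.charmatrix, ← h3]
  simp [Matrix.det_diagonal]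

lemma charpoly_dvd_of_pow {V : Type*} [AddCommGroup V] [Module ℚ V] [FiniteDimensional ℚ V]
    (a : V →ₗ[ℚ] V) (N : ℕ) (ha : a ^ N = 1) :
    a.charpoly ∣ (X ^ N - 1) ^ (Module.finrank ℚ V) := by
  have h := matrix_charpoly_dvd_of_pow
    (LinearMap.toMatrix (Module.finBasis ℚ V) (Module.finBasis ℚ V) a) N
    (by rw [LinearMap.toMatrix_pow, ha, LinearMap.toMatrix_one])
  rwa [LinearMap.charpoly_toMatrix, Fintype.card_fin] at h

lemma trace_of_pow_eq_one {V : Type*} [AddCommGroup V] [Module ℚ V] [FiniteDimensional ℚ V]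
    {p : ℕ} (hp : p.Prime) (m : ℕ) (a : V →ₗ[ℚ] V) (ha : a ^ (p ^ m) = 1) :
    ∃ k : ℕ, (Module.finrank ℚ V : ℚ) - LinearMap.trace ℚ V a = p * k ∧
      k * (p - 1) ≤ Module.finrank ℚ V ∧ (k = 0 → a = 1) := by
  have hmin : minpoly ℚ a ∣ X ^ (p ^ m) - 1 := minpoly.dvd _ _ (by simp [ha])
  have hdvd : a.charpoly ∣ (X ^ (p ^ m) - 1) ^ (Module.finrank ℚ V) :=
charpoly_dvd_of_pow a _ ha
  obtain ⟨k, h1, h2, h3⟩ := goodPoly_of_dvd_pow hp m _ _ _ rfl a.charpoly_monic hdvd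
  rw [LinearMap.charpoly_natDegree] at h1 h2 h3
  refine ⟨k, ?_, h2, ?_⟩
  · rw [← h1, LinearMap.trace_eq_matrix_trace ℚ (Module.finBasis ℚ V), Matrix.trace_eq_neg_charpoly_nextCoeff, LinearMap.charpoly_toMatrix]; ring
  · intro hk
    have h4 := h3 hk
    have hsep : (X ^ (p ^ m) - 1 : ℚ[X]).Separable := by
      have := hp.pos
      exact (X_pow_sub_one_separable_iff).mpr (by positivity)
    have h5 : minpoly ℚ a ∣ X - 1 := by
      have h6 : minpoly ℚ a ∣ (X - 1) ^ Module.finrank ℚ V := h4 ▸ LinearMap.minpoly_dvd_charpoly a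
      exact (hsep.squarefree.squarefree_of_dvd hmin).isRadical _ _ h6
    have := (minpoly.dvd_iff).mp h5
    simpa [sub_eq_zero] using this

section
open Representation
lemma exists_int_sum_pow {G V : Type} [Group G] [Fintype G] [AddCommGroup V] [Module ℚ V]
    [FiniteDimensional ℚ V] (ρ : Representation ℚ G V) (j : ℕ) :
    ∃ d : ℤ, ∑ g : G, ρ.character g ^ j = (Nat.card G : ℚ) * d := by
  obtain ⟨W, _, _, _, σ, hσ⟩ : ∃ (W : Type) (_ : AddCommGroup W) (_ : Module ℚ W)
      (_ : FiniteDimensional ℚ W) (σ : Representation ℚ G W), ∀ g, σ.character g = ρ.character g ^ j := by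
    induction j with
    | zero => exact ⟨ℚ, inferInstance, inferInstance, inferInstance, Representation.trivial ℚ G ℚ, by
        intro g; simp [character, Representation.trivial]⟩
    | succ j ih =>
      obtain ⟨W, _, _, _, σ, hσ⟩ := ih
      exact ⟨TensorProduct ℚ W V, inferInstance, inferInstance, inferInstance, tprod σ ρ, by
        intro g; rw [char_tensor, Pi.mul_apply, hσ, pow_succ]⟩
  have hc : (Nat.card G : ℚ) ≠ 0 := by simp
  let : Invertible (Nat.card G : ℚ) := invertibleOfNonzero hc
  have := card_inv_mul_sum_char_eq_finrank σ
  refine ⟨Module.finrank ℚ (invariants σ), ?_⟩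
  simp_rw [← hσ]
  push_cast
  rw [← this, mul_inv_cancel_left₀ hc]

lemma exists_int_sum_poly {G V : Type} [Group G] [Fintype G] [AddCommGroup V] [Module ℚ V]
    [FiniteDimensional ℚ V] (ρ : Representation ℚ G V) (F : ℤ[X]) :
    ∃ d : ℤ, ∑ g : G, aeval (ρ.character g) F = (Nat.card G : ℚ) * d := by
  choose d hd using exists_int_sum_pow ρ
  refine ⟨∑ j ∈ F.support, F.coeff j * d j, ?_⟩
  simp_rw [aeval_def, eval₂_eq_sum, Polynomial.sum]
  rw [Finset.sum_comm]
  simp_rw [← Finset.mul_sum, hd]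
  push_cast
  rw [Finset.mul_sum]
  refine Finset.sum_congr rfl fun j _ => ?_
  simp; ring

lemma schur_bound {G V : Type} [Group G] [Finite G] [AddCommGroup V] [Module ℚ V]
    [FiniteDimensional ℚ V] (ρ : Representation ℚ G V) (hρ : Function.Injective ρ)
    {p : ℕ} (hp : p.Prime) (hG : IsPGroup p G) :
    Nat.card G ∣ p ^ (Module.finrank ℚ V / (p - 1)) * (Module.finrank ℚ V / (p - 1)).factorial := by
  have := Fintype.ofFinite G
  set n := Module.finrank ℚ V
  set M := n / (p - 1)
  let F : ℤ[X] := ∏ k ∈ Finset.range M, (X - C ((n:ℤ) - p * (k + 1 : ℕ)))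
  obtain ⟨d, hd⟩ := exists_int_sum_poly ρ F
  have hF : ∀ x : ℚ, aeval x F = ∏ k ∈ Finset.range M, (x - ((n:ℚ) - p * (k + 1 : ℕ))) := by
    intro x; simp [F, map_prod]
  rw [Finset.sum_eq_single (1 : G)] at hd
  · rw [hF, char_one] at hd
    have : ((p ^ M * M.factorial : ℕ) : ℤ) = (Nat.card G : ℤ) * d := by
      have : ((p ^ M * M.factorial : ℕ) : ℚ) = (Nat.card G : ℚ) * d := by
        rw [← hd, ← Finset.prod_range_add_one_eq_factorial, ← Finset.card_range M, ← Finset.prod_const,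
          Finset.card_range, ← Finset.prod_mul_distrib]
        push_cast
        refine Finset.prod_congr rfl fun k _ => ?_
        change _ = (n:ℚ) - _
        ring
      exact_mod_cast this
    exact Int.natCast_dvd_natCast.mp ⟨d, this⟩
  · intro g _ hg
    obtain ⟨m, hm⟩ := hG g
    obtain ⟨k, h1, h2, h3⟩ := trace_of_pow_eq_one hp m (ρ g) (by rw [← map_pow, hm, map_one])
    have hk : k ≠ 0 := fun h => hg (hρ (by rw [h3 h, map_one]))
    rw [hF]
    apply Finset.prod_eq_zero (i := k - 1)
    · have : k ≤ M := (Nat.le_div_iff_mul_le (by have := hp.two_le; omega)).mpr h2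
      simp; omega
    · rw [show k - 1 + 1 = k by omega, ← h1]
      simp [character, n]
  · simp
end
end
section
open Subgroup

lemma exists_fixed_in_normal {Q : Type*} [Group Q] [Finite Q] {p : ℕ} [Fact p.Prime]
    (hQ : IsPGroup p Q) (N : Subgroup Q) [N.Normal] (hN : N ≠ ⊥) :
    ∃ a ∈ N, a ≠ 1 ∧ ∀ x, x * a * x⁻¹ = a := by
  let act : MulAction Q N := MulAction.compHom N (MulAut.conjNormal : Q →* MulAut N)
  have hs : ∀ (x : Q) (n : N), ((x • n : N) : Q) = x * n * x⁻¹ := fun x n =>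
    MulAut.conjNormal_apply x n
  have hd : p ∣ Nat.card N := by
    rcases (hQ.to_subgroup N).card_eq_or_dvd with h | h
    · exact absurd ((Subgroup.card_eq_one).mp h) hN
    · exact h
  obtain ⟨b, hb, hb1⟩ := hQ.exists_fixed_point_of_prime_dvd_card_of_fixed_point N hd
    (a := 1) (by
      rw [MulAction.mem_fixedPoints]; intro x; apply Subtype.ext; rw [hs]; simp)
  refine ⟨b, b.2, fun h => hb1 (Subtype.ext (by simpa using h.symm)), fun x => ?_⟩
  rw [← hs, hb x]

lemma exists_central_mod {G : Type*} [Group G] [Finite G] {p : ℕ} [Fact p.Prime]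
    (hG : IsPGroup p G) (Z N : Subgroup G) [Z.Normal] [N.Normal] (hN : ¬ N ≤ Z) :
    ∃ a ∈ N, a ∉ Z ∧ ∀ x, x * a * x⁻¹ * a⁻¹ ∈ Z := by
  have : (N.map (QuotientGroup.mk' Z)).Normal :=
    Subgroup.Normal.map inferInstance _ (QuotientGroup.mk'_surjective Z)
  obtain ⟨q, hq, hq1, hfix⟩ := exists_fixed_in_normal (hG.to_quotient Z) (N.map (QuotientGroup.mk' Z))
    (by rw [Ne, Subgroup.map_eq_bot_iff, QuotientGroup.ker_mk']; exact hN)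
  obtain ⟨a, ha, rfl⟩ := hq
  refine ⟨a, ha, fun h => hq1 ?_, fun x => ?_⟩
  · exact (QuotientGroup.eq_one_iff a).mpr h
  · rw [← QuotientGroup.eq_one_iff]
    have := hfix (QuotientGroup.mk' Z x)
    simp only [QuotientGroup.mk'_apply] at this
    simp only [QuotientGroup.mk_mul, QuotientGroup.mk_inv]
    rw [this, mul_inv_cancel]

lemma exists_self_centralizing {G : Type*} [Group G] [Finite G] {p : ℕ} [Fact p.Prime]
    (hG : IsPGroup p G) :
    ∃ A : Subgroup G, A.Normal ∧ centralizer (A : Set G) = A := by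
  obtain ⟨A, hA⟩ := (Set.toFinite {A : Subgroup G | A.Normal ∧ A ≤ centralizer (A : Set G)}).exists_maximal
    ⟨⊥, inferInstance, bot_le⟩
  obtain ⟨hn, hab⟩ := hA.prop
  refine ⟨A, hn, le_antisymm ?_ hab⟩
  by_contra hcon
  obtain ⟨a, ha, haA, hx⟩ := exists_central_mod hG A (centralizer (A : Set G)) hcon
  have hz : zpowers a ≤ centralizer (A : Set G) := by rwa [zpowers_le]
  have hzz : zpowers a ≤ centralizer (zpowers a : Set G) := by
    intro y hy
    obtain ⟨i, rfl⟩ := mem_zpowers_iff.mp hy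
    rw [mem_centralizer_iff]
    rintro w hw
    obtain ⟨j, rfl⟩ := mem_zpowers_iff.mp hw
    exact ((Commute.refl a).zpow_zpow _ _).eq
  have h1 : A ⊔ zpowers a ≤ centralizer (A : Set G) := sup_le hab hz
  have h2 : A ⊔ zpowers a ≤ centralizer (zpowers a : Set G) :=
    sup_le (le_centralizer_iff.mp hz) hzz
  have h3 : A ⊔ zpowers a ≤ centralizer ((A ⊔ zpowers a : Subgroup G) : Set G) :=
    sup_le (le_centralizer_iff.mp h1) (le_centralizer_iff.mp h2)
  have h4 : (A ⊔ zpowers a).Normal := by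
    refine ⟨fun n hn' x => ?_⟩
    have : A ⊔ zpowers a ≤ (A ⊔ zpowers a).comap (MulAut.conj x).toMonoidHom := by
      refine sup_le ?_ ?_
      · intro y hy
        exact (le_sup_left : A ≤ A ⊔ zpowers a) (hn.conj_mem y hy x)
      · rw [zpowers_le]
        have e : x * a * x⁻¹ = (x * a * x⁻¹ * a⁻¹) * a := by group
        change x * a * x⁻¹ ∈ A ⊔ zpowers a
        rw [e]
        exact mul_mem ((le_sup_left : A ≤ A ⊔ zpowers a) (hx x))
          ((le_sup_right : zpowers a ≤ A ⊔ zpowers a) (mem_zpowers a))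
    exact this hn'
  have h5 := hA.le_of_ge (y := A ⊔ zpowers a) ⟨h4, h3⟩ le_sup_left
  exact haA (h5 ((le_sup_right : zpowers a ≤ A ⊔ zpowers a) (mem_zpowers a)))

lemma card_ker_pow_le {A : Type*} [CommGroup A] [Finite A]
    (h : Nat.card (powMonoidHom 2 : A →* A).ker ≤ 2) (j : ℕ) :
    Nat.card (powMonoidHom (2 ^ j) : A →* A).ker ≤ 2 ^ j := by
  induction j with
  | zero =>
    have : (powMonoidHom (2 ^ 0) : A →* A).ker = ⊥ := by
      ext x; simp [MonoidHom.mem_ker]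
    rw [this]; simp
  | succ j ih =>
    let K := (powMonoidHom (2 ^ (j + 1)) : A →* A).ker
    let f : K →* (powMonoidHom (2 ^ j) : A →* A).ker :=
      { toFun := fun x => ⟨(x : A) ^ 2, by
          have := x.2
          simp only [K, MonoidHom.mem_ker, powMonoidHom_apply] at this ⊢
          rw [← pow_mul, ← pow_succ', this]⟩
        map_one' := by simp
        map_mul' := fun x y => by ext; simp [mul_pow] }
    have h1 : Nat.card K = Nat.card f.range * Nat.card f.ker := by
      rw [card_eq_card_quotient_mul_card_subgroup f.ker, ← Subgroup.index, Subgroup.index_ker]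
    have h2 : Nat.card f.range ≤ 2 ^ j := (Subgroup.card_le_card_group _).trans ih
    have h3 : Nat.card f.ker ≤ 2 := by
      refine le_trans (Nat.card_le_card_of_injective
        (fun x : f.ker => (⟨((x : K) : A), by
          have := x.2
          rw [MonoidHom.mem_ker] at this
          have := congrArg Subtype.val this
          rw [MonoidHom.mem_ker]; exact this⟩ : (powMonoidHom 2 : A →* A).ker)) ?_) h
      intro x y hxy
      apply Subtype.ext; apply Subtype.ext
      simpa using hxy
    change Nat.card K ≤ _
    rw [h1, pow_succ]
    exact Nat.mul_le_mul h2 h3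

lemma isCyclic_of_two {A : Type*} [CommGroup A] [Finite A] (hA : IsPGroup 2 A)
    (h : Nat.card (powMonoidHom 2 : A →* A).ker ≤ 2) : IsCyclic A := by
  classical
  have := Fintype.ofFinite A
  apply isCyclic_of_card_pow_eq_one_le
  intro n hn
  obtain ⟨j, m, hm, rfl⟩ := Nat.exists_eq_two_pow_mul_odd hn.ne'
  have h1 : (Finset.univ.filter fun a : A => a ^ (2 ^ j * m) = 1).card ≤
      Nat.card (powMonoidHom (2 ^ j) : A →* A).ker := by
    rw [← Fintype.card_coe, ← Nat.card_eq_fintype_card]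
    refine Nat.card_le_card_of_injective (fun x => ⟨(x : A), ?_⟩) ?_
    · have hx : (x : A) ^ (2 ^ j * m) = 1 := (Finset.mem_filter.mp x.2).2
      obtain ⟨k, hk⟩ := hA (x : A)
      have h1 := orderOf_dvd_of_pow_eq_one hx
      have h2 := orderOf_dvd_of_pow_eq_one hk
      have h3 : (orderOf (x : A)).Coprime m :=
        Nat.Coprime.coprime_dvd_left h2 (Nat.Coprime.pow_left k (Nat.coprime_two_left.mpr hm))
      rw [MonoidHom.mem_ker, powMonoidHom_apply]
      exact orderOf_dvd_iff_pow_eq_one.mp (h3.dvd_of_dvd_mul_right h1)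
    · intro x y hxy
      apply Subtype.ext
      simpa using hxy
  refine h1.trans ((card_ker_pow_le h j).trans (Nat.le_mul_of_pos_right _ hm.pos))

lemma card_le_of_self_centralizing {G : Type*} [Group G] [Finite G] (A : Subgroup G) [A.Normal]
    (hA : centralizer (A : Set G) = A) [IsCyclic A] :
    Nat.card G ≤ Nat.card A * (Nat.card A).totient := by
  let f : G →* MulAut A := MulAut.conjNormal
  have hk : f.ker ≤ A := by
    intro x hx
    rw [← hA, mem_centralizer_iff]
    intro y hy
    have h1 : f x ⟨y, hy⟩ = ⟨y, hy⟩ := by rw [MonoidHom.mem_ker.mp hx]; rfl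
    have h2 : x * y * x⁻¹ = y := by
      have := congrArg Subtype.val h1
      rwa [MulAut.conjNormal_apply] at this
    exact (mul_inv_eq_iff_eq_mul.mp h2).symm
  have := Finite.of_equiv _ (IsCyclic.mulAutMulEquiv A).symm.toEquiv
  rw [card_eq_card_quotient_mul_card_subgroup f.ker, ← Subgroup.index, Subgroup.index_ker, mul_comm,
    ← IsCyclic.card_mulAut]
  exact Nat.mul_le_mul (Subgroup.card_le_of_le hk) (Subgroup.card_le_card_group _)

section TwoGroups
open Module

/-- Every `J`-invariant subspace has even dimension. -/
def EvenInv {V : Type} [AddCommGroup V] [Module ℚ V] (J : V →ₗ[ℚ] V) : Prop :=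
  ∀ W : Submodule ℚ V, (∀ w ∈ W, J w ∈ W) → Even (finrank ℚ W)

def expo (g : ℕ) : ℕ := 2 * g + padicValNat 2 g.factorial

lemma expo_add (a b : ℕ) : expo a + expo b ≤ expo (a + b) := by
  have h := Nat.factorial_mul_factorial_dvd_factorial_add a b
  have h1 : padicValNat 2 (a.factorial * b.factorial) ≤ padicValNat 2 (a + b).factorial :=
    (padicValNat_dvd_iff_le (Nat.factorial_ne_zero _)).mp (pow_padicValNat_dvd.trans h)
  rw [padicValNat.mul (Nat.factorial_ne_zero _) (Nat.factorial_ne_zero _)] at h1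
  unfold expo; omega

lemma expo_double (a : ℕ) (ha : a ≠ 0) : 1 + (expo a + expo a) ≤ expo (a + a) := by
  have h1 := padicValNat_factorial_mul (p := 2) a
  have h2 := padicValNat_factorial_lt_of_ne_zero 2 ha
  unfold expo
  rw [← two_mul a, h1]; omega

def Bound (g : ℕ) : Prop :=
  ∀ (G V : Type) [Group G] [Finite G] [AddCommGroup V] [Module ℚ V] [FiniteDimensional ℚ V]
    (ρ : G →* (V →ₗ[ℚ] V)) (J : V →ₗ[ℚ] V), IsPGroup 2 G → Function.Injective ρ →
    (∀ x v, ρ x (J v) = J (ρ x v)) → EvenInv J → finrank ℚ V = 2 * g → Nat.card G ≤ 2 ^ expo g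

/-- restriction of a representation to an invariant subspace -/
def resRep {G V : Type} [Group G] [AddCommGroup V] [Module ℚ V]
    (ρ : G →* (V →ₗ[ℚ] V)) (W : Submodule ℚ V) (hW : ∀ x, ∀ w ∈ W, ρ x w ∈ W) :
    G →* (W →ₗ[ℚ] W) where
  toFun x := (ρ x).restrict (hW x)
  map_one' := by ext; simp
  map_mul' x y := by ext; simp

lemma resRep_apply {G V : Type} [Group G] [AddCommGroup V] [Module ℚ V]
    (ρ : G →* (V →ₗ[ℚ] V)) (W : Submodule ℚ V) (hW : ∀ x, ∀ w ∈ W, ρ x w ∈ W) (x : G) (w : W) :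
    ((resRep ρ W hW x w : W) : V) = ρ x w := rfl

lemma EvenInv.restrict {V : Type} [AddCommGroup V] [Module ℚ V] {J : V →ₗ[ℚ] V} (hJ : EvenInv J)
    (W : Submodule ℚ V) (hW : ∀ w ∈ W, J w ∈ W) : EvenInv (J.restrict hW) := by
  intro U hU
  have h := hJ (U.map W.subtype) (by
    rintro _ ⟨u, hu, rfl⟩
    exact ⟨J.restrict hW u, hU u hu, rfl⟩)
  rwa [← (Submodule.equivMapOfInjective W.subtype W.injective_subtype U).finrank_eq] at h

lemma bound_split {a b : ℕ} (ha : Bound a) (hb : Bound b) {G V : Type} [Group G] [Finite G]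
    [AddCommGroup V] [Module ℚ V] [FiniteDimensional ℚ V]
    (ρ : G →* (V →ₗ[ℚ] V)) (J : V →ₗ[ℚ] V) (hG : IsPGroup 2 G) (hρ : Function.Injective ρ)
    (hJρ : ∀ x v, ρ x (J v) = J (ρ x v)) (hJ : EvenInv J)
    (W₁ W₂ : Submodule ℚ V) (hc : W₁ ⊔ W₂ = ⊤)
    (hW₁ : ∀ x, ∀ w ∈ W₁, ρ x w ∈ W₁) (hW₂ : ∀ x, ∀ w ∈ W₂, ρ x w ∈ W₂)
    (hJ₁ : ∀ w ∈ W₁, J w ∈ W₁) (hJ₂ : ∀ w ∈ W₂, J w ∈ W₂)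
    (hd₁ : finrank ℚ W₁ = 2 * a) (hd₂ : finrank ℚ W₂ = 2 * b) :
    Nat.card G ≤ 2 ^ (expo a + expo b) := by
  let ρ₁ := resRep ρ W₁ hW₁
  let K := ρ₁.ker
  have h1 : Nat.card (G ⧸ K) ≤ 2 ^ expo a := by
    refine ha (G ⧸ K) W₁ (QuotientGroup.lift K ρ₁ le_rfl) (J.restrict hJ₁) (hG.to_quotient K) ?_ ?_
      (hJ.restrict W₁ hJ₁) hd₁
    · intro x y
      induction x using QuotientGroup.induction_on with | H x => ?_
      induction y using QuotientGroup.induction_on with | H y => ?_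
      intro h
      rw [QuotientGroup.lift_mk, QuotientGroup.lift_mk] at h
      rw [QuotientGroup.eq]
      change ρ₁ (x⁻¹ * y) = 1
      rw [map_mul, ← h, ← map_mul, inv_mul_cancel, map_one]
    · intro x v
      induction x using QuotientGroup.induction_on with | H x => ?_
      rw [QuotientGroup.lift_mk]
      apply Subtype.ext
      exact hJρ x v
  have h2 : Nat.card K ≤ 2 ^ expo b := by
    refine hb K W₂ ((resRep ρ W₂ hW₂).comp K.subtype) (J.restrict hJ₂) (hG.to_subgroup K) ?_ ?_
      (hJ.restrict W₂ hJ₂) hd₂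
    · rw [injective_iff_map_eq_one]
      intro x hx
      apply Subtype.ext
      apply hρ
      have hx1 : ρ₁ x = 1 := x.2
      have hle : W₁ ⊔ W₂ ≤ LinearMap.eqLocus (ρ x) (1 : V →ₗ[ℚ] V) := by
        refine sup_le ?_ ?_
        · intro w hw
          have := congrArg (fun f => ((f ⟨w, hw⟩ : W₁) : V)) hx1
          exact this
        · intro w hw
          have := congrArg (fun f => ((f ⟨w, hw⟩ : W₂) : V)) hx
          exact this
      rw [hc] at hle
      ext v
      rw [Subgroup.coe_one, map_one]
      exact hle (Submodule.mem_top : v ∈ ⊤)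
    · intro x v
      apply Subtype.ext
      exact hJρ x v
  rw [card_eq_card_quotient_mul_card_subgroup K, pow_add]
  exact Nat.mul_le_mul h1 h2

lemma commute_of_dim_two {V : Type} [AddCommGroup V] [Module ℚ V] [FiniteDimensional ℚ V]
    (J X Y : V →ₗ[ℚ] V) (hJ : EvenInv J) (hV : finrank ℚ V = 2)
    (hX : ∀ v, X (J v) = J (X v)) (hY : ∀ v, Y (J v) = J (Y v)) : X * Y = Y * X := by
  have : Nontrivial V := Module.nontrivial_of_finrank_pos (R := ℚ) (by omega)
  obtain ⟨v, hv⟩ := exists_ne (0 : V)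
  have hli : LinearIndependent ℚ ![v, J v] := by
    rw [LinearIndependent.pair_iff' hv]
    intro c hc
    have := hJ (ℚ ∙ v) (by
      intro w hw
      obtain ⟨r, rfl⟩ := Submodule.mem_span_singleton.mp hw
      rw [map_smul, ← hc]
      exact Submodule.smul_mem _ _ (Submodule.smul_mem _ _ (Submodule.mem_span_singleton_self v)))
    rw [finrank_span_singleton hv] at this
    exact absurd this (by decide)
  have hspan := hli.span_eq_top_of_card_eq_finrank' (by simp [hV])
  have hr : Set.range ![v, J v] = {v, J v} := by simp [Set.pair_comm]
  rw [hr] at hspan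
  obtain ⟨p, q, hpq⟩ := Submodule.mem_span_pair.mp (hspan ▸ Submodule.mem_top : X v ∈ Submodule.span ℚ {v, J v})
  obtain ⟨r, s, hrs⟩ := Submodule.mem_span_pair.mp (hspan ▸ Submodule.mem_top : Y v ∈ Submodule.span ℚ {v, J v})
  have hv' : X (Y v) = Y (X v) := by
    rw [← hpq, ← hrs]
    simp only [map_add, map_smul, hX, hY]
    rw [← hpq, ← hrs]
    simp only [map_add, map_smul, smul_add, smul_smul]
    rw [mul_comm r p, mul_comm r q, mul_comm s p, mul_comm s q]
    abel
  have hle : Submodule.span ℚ {v, J v} ≤ LinearMap.eqLocus (X * Y) (Y * X) := by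
    rw [Submodule.span_le]
    rintro w (rfl | rfl)
    · exact hv'
    · change X (Y (J v)) = Y (X (J v))
      rw [hX, hY, hX, hY, hv']
  rw [hspan] at hle
  ext w
  exact hle (Submodule.mem_top : w ∈ ⊤)

lemma invol_sup {V : Type} [AddCommGroup V] [Module ℚ V] (z : V →ₗ[ℚ] V) (hz : z * z = 1) :
    IsCompl (LinearMap.ker (z - 1)) (LinearMap.ker (z + 1)) := by
  have hz' : ∀ v, z (z v) = v := fun v => LinearMap.congr_fun hz v
  constructor
  · rw [Submodule.disjoint_def]
    intro v h1 h2
    have h1 : z v - v = 0 := h1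
    have h2 : z v + v = 0 := h2
    have h3 : (2 : ℚ) • v = 0 := by
      rw [two_smul]; rw [sub_eq_zero.mp h1] at h2; exact h2
    simpa using h3
  · rw [codisjoint_iff, eq_top_iff]
    intro v _
    rw [Submodule.mem_sup]
    refine ⟨(1/2 : ℚ) • (v + z v), ?_, (1/2 : ℚ) • (v - z v), ?_, ?_⟩
    · simp [hz']; abel_nf
    · simp [hz']
    · module

lemma pow_le_of_negone {V : Type} [AddCommGroup V] [Module ℚ V] [FiniteDimensional ℚ V] [Nontrivial V]
    (a : V →ₗ[ℚ] V) (k : ℕ) (ha : a ^ (2 ^ k) = -1) : 2 ^ k ≤ finrank ℚ V := by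
  have hcyc : Polynomial.cyclotomic (2 ^ (k + 1)) ℚ = Polynomial.X ^ (2 ^ k) + 1 := by
    rw [Polynomial.cyclotomic_prime_pow_eq_geom_sum Nat.prime_two]
    simp [Finset.sum_range_succ, add_comm]
  have hirr := Polynomial.cyclotomic.irreducible_rat (n := 2 ^ (k + 1)) (by positivity)
  have hd : minpoly ℚ a ∣ Polynomial.cyclotomic (2 ^ (k + 1)) ℚ :=
    minpoly.dvd _ _ (by rw [hcyc]; simp [ha])
  have hm : minpoly ℚ a = Polynomial.cyclotomic (2 ^ (k + 1)) ℚ := by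
    have hint := Algebra.IsIntegral.isIntegral (R := ℚ) a
    refine Polynomial.eq_of_monic_of_associated (minpoly.monic hint) (Polynomial.cyclotomic.monic _ _) ?_
    rcases hirr.dvd_iff.mp hd with h | h
    · exact absurd h (minpoly.not_isUnit _ _)
    · exact h.symm
  have h1 := Polynomial.natDegree_le_of_dvd (LinearMap.minpoly_dvd_charpoly a) a.charpoly_monic.ne_zero
  rw [hm, LinearMap.charpoly_natDegree, Polynomial.natDegree_cyclotomic,
    Nat.totient_prime_pow Nat.prime_two (by omega)] at h1
  simpa using h1

lemma invol_case {g : ℕ} (ih : ∀ m < g, Bound m) {G V : Type} [Group G] [Finite G]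
    [AddCommGroup V] [Module ℚ V] [FiniteDimensional ℚ V]
    (ρ : G →* (V →ₗ[ℚ] V)) (J : V →ₗ[ℚ] V) (hG : IsPGroup 2 G) (hρ : Function.Injective ρ)
    (hJρ : ∀ x v, ρ x (J v) = J (ρ x v)) (hJ : EvenInv J) (hV : finrank ℚ V = 2 * g)
    (z : V →ₗ[ℚ] V) (hz : z * z = 1) (hz1 : z ≠ 1) (hz2 : z ≠ -1)
    (hzJ : ∀ v, z (J v) = J (z v)) (hzρ : ∀ x v, z (ρ x v) = ρ x (z v)) :
    ∃ a b, finrank ℚ (LinearMap.ker (z - 1)) = 2 * a ∧ finrank ℚ (LinearMap.ker (z + 1)) = 2 * b ∧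
      a + b = g ∧ a ≠ 0 ∧ b ≠ 0 ∧ Nat.card G ≤ 2 ^ (expo a + expo b) := by
  have hc := invol_sup z hz
  have hsum := Submodule.finrank_add_eq_of_isCompl hc
  have hm1 : ∀ v, v ∈ LinearMap.ker (z - 1) ↔ z v = v := fun v => by
    simp [sub_eq_zero]
  have hm2 : ∀ v, v ∈ LinearMap.ker (z + 1) ↔ z v = -v := fun v => by
    simp [add_eq_zero_iff_eq_neg]
  have hJ1 : ∀ w ∈ LinearMap.ker (z - 1), J w ∈ LinearMap.ker (z - 1) := by
    intro w hw; rw [hm1] at hw ⊢; rw [hzJ, hw]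
  have hJ2 : ∀ w ∈ LinearMap.ker (z + 1), J w ∈ LinearMap.ker (z + 1) := by
    intro w hw; rw [hm2] at hw ⊢; rw [hzJ, hw, map_neg]
  have hr1 : ∀ x, ∀ w ∈ LinearMap.ker (z - 1), ρ x w ∈ LinearMap.ker (z - 1) := by
    intro x w hw; rw [hm1] at hw ⊢; rw [hzρ, hw]
  have hr2 : ∀ x, ∀ w ∈ LinearMap.ker (z + 1), ρ x w ∈ LinearMap.ker (z + 1) := by
    intro x w hw; rw [hm2] at hw ⊢; rw [hzρ, hw, map_neg]
  obtain ⟨a, ha⟩ := hJ _ hJ1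
  obtain ⟨b, hb⟩ := hJ _ hJ2
  have ha0 : a ≠ 0 := by
    rintro rfl
    apply hz2
    have h0 : LinearMap.ker (z - 1) = ⊥ := Submodule.finrank_eq_zero.mp ha
    have ht : LinearMap.ker (z + 1) = ⊤ := by
      have := hc.sup_eq_top; rwa [h0, bot_sup_eq] at this
    ext v
    exact (hm2 v).mp (ht ▸ Submodule.mem_top)
  have hb0 : b ≠ 0 := by
    rintro rfl
    apply hz1
    have h0 : LinearMap.ker (z + 1) = ⊥ := Submodule.finrank_eq_zero.mp hb
    have ht : LinearMap.ker (z - 1) = ⊤ := by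
      have := hc.sup_eq_top; rwa [h0, sup_bot_eq] at this
    ext v
    exact (hm1 v).mp (ht ▸ Submodule.mem_top)
  refine ⟨a, b, by omega, by omega, by omega, ha0, hb0, ?_⟩
  exact bound_split (ih a (by omega)) (ih b (by omega)) ρ J hG hρ hJρ hJ _ _ hc.sup_eq_top
    hr1 hr2 hJ1 hJ2 (by omega) (by omega)

lemma noncentral_case {g : ℕ} (ih : ∀ m < g, Bound m) {G V : Type} [Group G] [Finite G]
    [AddCommGroup V] [Module ℚ V] [FiniteDimensional ℚ V]
    (ρ : G →* (V →ₗ[ℚ] V)) (J : V →ₗ[ℚ] V) (hG : IsPGroup 2 G) (hρ : Function.Injective ρ)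
    (hJρ : ∀ x v, ρ x (J v) = J (ρ x v)) (hJ : EvenInv J) (hV : finrank ℚ V = 2 * g)
    (a : G) (ha : a * a = 1) (ha1 : ρ a ≠ 1) (ha2 : ρ a ≠ -1)
    (hconj : ∀ x, ρ (x * a * x⁻¹) = ρ a ∨ ρ (x * a * x⁻¹) = -ρ a) :
    Nat.card G ≤ 2 ^ expo g := by
  have hz : ρ a * ρ a = 1 := by rw [← map_mul, ha, map_one]
  by_cases hall : ∀ x, a * x = x * a
  · obtain ⟨m, n, -, -, hmn, -, -, hcard⟩ := invol_case ih ρ J hG hρ hJρ hJ hV (ρ a) hz ha1 ha2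
      (hJρ a) (fun x v => by
        change (ρ a * ρ x) v = (ρ x * ρ a) v
        rw [← map_mul, ← map_mul, hall])
    refine hcard.trans (Nat.pow_le_pow_right (by norm_num) ?_)
    rw [← hmn]; exact expo_add m n
  · push Not at hall
    obtain ⟨x₀, hx₀⟩ := hall
    let C := centralizer ({a} : Set G)
    have hC : ∀ x, x ∈ C ↔ a * x = x * a := fun x => by
      simp [C, mem_centralizer_iff]
    have hneg : ∀ x, x ∉ C → ρ (x * a * x⁻¹) = -ρ a := by
      intro x hx
      rcases hconj x with h | h
      · exact absurd ((hC x).mpr ((mul_inv_eq_iff_eq_mul.mp (hρ h)).symm)) hx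
      · exact h
    have hx₀C : x₀ ∉ C := fun h => hx₀ ((hC _).mp h)
    have hcardC : Nat.card G ≤ Nat.card C * 2 := by
      classical
      have hmem : ∀ x, x ∉ C → x₀⁻¹ * x ∈ C := by
        intro x hx
        have h1 := (hneg x hx).trans (hneg x₀ hx₀C).symm
        have h2 : x * a * x⁻¹ = x₀ * a * x₀⁻¹ := hρ h1
        rw [hC]
        calc a * (x₀⁻¹ * x) = x₀⁻¹ * (x₀ * a * x₀⁻¹) * x := by group
          _ = x₀⁻¹ * x * a := by rw [← h2]; group
      have h := Nat.card_le_card_of_injective (β := C × Bool)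
        (fun x => if h : x ∈ C then (⟨x, h⟩, true) else (⟨x₀⁻¹ * x, hmem x h⟩, false)) (by
          intro x y hxy
          by_cases hx : x ∈ C <;> by_cases hy : y ∈ C <;> simp [hx, hy] at hxy
          · exact hxy
          · exact hxy)
      rwa [Nat.card_prod, Nat.card_eq_fintype_card (α := Bool), Fintype.card_bool] at h
    obtain ⟨m, n, hm, hn, hmn, hm0, -, hcard⟩ := invol_case ih (ρ.comp C.subtype) J (hG.to_subgroup C)
      (hρ.comp Subtype.val_injective) (fun x v => hJρ x v) hJ hV (ρ a) hz ha1 ha2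
      (hJρ a) (fun x v => by
        change (ρ a * ρ x) v = (ρ x * ρ a) v
        rw [← map_mul, ← map_mul, (hC x).mp x.2])
    have hanti : ∀ v, ρ a (ρ x₀ v) = - ρ x₀ (ρ a v) := by
      intro v
      have h := hneg x₀ hx₀C
      have h2 : ρ x₀ * ρ a = -(ρ a * ρ x₀) := by
        rw [← neg_mul, ← h, ← map_mul, ← map_mul]; congr 1; group
      have h3 := LinearMap.congr_fun h2 v
      change ρ x₀ (ρ a v) = -(ρ a (ρ x₀ v)) at h3
      rw [h3, neg_neg]
    have hinj : Function.Injective (ρ x₀) := by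
      have : Function.LeftInverse (ρ x₀⁻¹) (ρ x₀) := fun v => by
        change (ρ x₀⁻¹ * ρ x₀) v = v
        rw [← map_mul, inv_mul_cancel, map_one]; rfl
      exact this.injective
    have hm1 : ∀ v, v ∈ LinearMap.ker (ρ a - 1) ↔ ρ a v = v := fun v => by
      simp [sub_eq_zero]
    have hm2 : ∀ v, v ∈ LinearMap.ker (ρ a + 1) ↔ ρ a v = -v := fun v => by
      simp [add_eq_zero_iff_eq_neg]
    have hle1 : finrank ℚ (LinearMap.ker (ρ a - 1)) ≤ finrank ℚ (LinearMap.ker (ρ a + 1)) := by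
      refine LinearMap.finrank_le_finrank_of_injective
        (f := (ρ x₀).restrict (p := LinearMap.ker (ρ a - 1)) (q := LinearMap.ker (ρ a + 1)) ?_) ?_
      · intro w hw; rw [hm1] at hw; rw [hm2, hanti, hw]
      · intro u v huv
        exact Subtype.ext (hinj (congrArg Subtype.val huv))
    have hle2 : finrank ℚ (LinearMap.ker (ρ a + 1)) ≤ finrank ℚ (LinearMap.ker (ρ a - 1)) := by
      refine LinearMap.finrank_le_finrank_of_injective
        (f := (ρ x₀).restrict (p := LinearMap.ker (ρ a + 1)) (q := LinearMap.ker (ρ a - 1)) ?_) ?_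
      · intro w hw; rw [hm2] at hw; rw [hm1, hanti, hw, map_neg, neg_neg]
      · intro u v huv
        exact Subtype.ext (hinj (congrArg Subtype.val huv))
    obtain rfl : m = n := by omega
    calc Nat.card G ≤ Nat.card C * 2 := hcardC
      _ ≤ 2 ^ (expo m + expo m) * 2 := Nat.mul_le_mul hcard le_rfl
      _ = 2 ^ (1 + (expo m + expo m)) := by rw [add_comm 1, pow_succ]
      _ ≤ 2 ^ expo g := Nat.pow_le_pow_right (by norm_num) (hmn ▸ expo_double m hm0)

lemma cyclic_case {g : ℕ} (hg : g ≠ 0) {G V : Type} [Group G] [Finite G]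
    [AddCommGroup V] [Module ℚ V] [FiniteDimensional ℚ V]
    (ρ : G →* (V →ₗ[ℚ] V)) (J : V →ₗ[ℚ] V) (hG : IsPGroup 2 G) (hρ : Function.Injective ρ)
    (hJρ : ∀ x v, ρ x (J v) = J (ρ x v)) (hJ : EvenInv J) (hV : finrank ℚ V = 2 * g)
    (hno : ∀ a : G, a * a = 1 → ρ a ≠ 1 → ρ a ≠ -1 →
      ¬ ∀ x, ρ (x * a * x⁻¹) = ρ a ∨ ρ (x * a * x⁻¹) = -ρ a) :
    Nat.card G ≤ 2 ^ expo g := by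
  have : Nontrivial V := Module.nontrivial_of_finrank_pos (R := ℚ) (by omega)
  obtain ⟨A, hAn, hA⟩ := exists_self_centralizing hG
  have hcomm : ∀ x ∈ A, ∀ y ∈ A, x * y = y * x := by
    intro x hx y hy
    have hy' := hy
    rw [← hA, mem_centralizer_iff] at hy'
    exact hy' x hx
  let Z : Subgroup G :=
    { carrier := {x | ρ x = 1 ∨ ρ x = -1}
      one_mem' := Or.inl (map_one _)
      mul_mem' := by
        rintro x y (hx | hx) (hy | hy) <;> simp [hx, hy]
      inv_mem' := by
        intro x hx
        have h1 : ρ x⁻¹ * ρ x = 1 := by rw [← map_mul, inv_mul_cancel, map_one]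
        rcases hx with hx | hx
        · left; rwa [hx, mul_one] at h1
        · right; rw [hx, mul_neg, mul_one] at h1; rw [← h1, neg_neg] }
  have hZmem : ∀ x, x ∈ Z ↔ (ρ x = 1 ∨ ρ x = -1) := fun x => Iff.rfl
  have hZn : Z.Normal := by
    refine ⟨fun n hn x => ?_⟩
    rw [hZmem] at hn ⊢
    have h1 : ρ x * ρ x⁻¹ = 1 := by rw [← map_mul, mul_inv_cancel, map_one]
    rcases hn with hn | hn
    · left; rw [map_mul, map_mul, hn, mul_one, h1]
    · right; rw [map_mul, map_mul, hn, mul_neg, mul_one, neg_mul, h1]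
  let Ω : Subgroup G :=
    { carrier := {x | x ∈ A ∧ x * x = 1}
      one_mem' := ⟨A.one_mem, one_mul 1⟩
      mul_mem' := by
        rintro x y ⟨hx, hx2⟩ ⟨hy, hy2⟩
        refine ⟨A.mul_mem hx hy, ?_⟩
        calc x * y * (x * y) = x * (y * x) * y := by group
          _ = (x * x) * (y * y) := by rw [hcomm y hy x hx]; group
          _ = 1 := by rw [hx2, hy2, one_mul]
      inv_mem' := by
        rintro x ⟨hx, hx2⟩
        refine ⟨A.inv_mem hx, ?_⟩
        rw [← mul_inv_rev, hx2, inv_one] }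
  have hΩmem : ∀ x, x ∈ Ω ↔ (x ∈ A ∧ x * x = 1) := fun x => Iff.rfl
  have hΩn : Ω.Normal := by
    refine ⟨fun n hn x => ?_⟩
    rw [hΩmem] at hn ⊢
    refine ⟨hAn.conj_mem n hn.1 x, ?_⟩
    calc x * n * x⁻¹ * (x * n * x⁻¹) = x * (n * n) * x⁻¹ := by group
      _ = 1 := by rw [hn.2]; group
  have hΩZ : Ω ≤ Z := by
    by_contra hcon
    obtain ⟨a, haΩ, haZ, hx⟩ := exists_central_mod hG Z Ω hcon
    rw [hZmem, not_or] at haZ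
    refine hno a haΩ.2 haZ.1 haZ.2 fun x => ?_
    have e : ρ (x * a * x⁻¹) = ρ (x * a * x⁻¹ * a⁻¹) * ρ a := by
      rw [← map_mul]; congr 1; group
    rcases hx x with h | h
    · left; rw [e, h, one_mul]
    · right; rw [e, h, neg_one_mul]
  let _ : CommGroup A :=
    { (inferInstance : Group A) with
      mul_comm := fun x y => Subtype.ext (hcomm x x.2 y y.2) }
  have hker : Nat.card (powMonoidHom 2 : A →* A).ker ≤ 2 := by
    classical
    have hmem : ∀ x : (powMonoidHom 2 : A →* A).ker, ((x : A) : G) ∈ Z := by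
      intro x
      apply hΩZ
      refine ⟨(x : A).2, ?_⟩
      have h := x.2
      rw [MonoidHom.mem_ker, powMonoidHom_apply, pow_two] at h
      exact congrArg Subtype.val h
    have h := Nat.card_le_card_of_injective (β := Bool)
      (fun x : (powMonoidHom 2 : A →* A).ker => decide (ρ ((x : A) : G) = 1)) (by
        intro x y hxy
        apply Subtype.ext; apply Subtype.ext; apply hρ
        simp only [decide_eq_decide] at hxy
        by_cases h1 : ρ ((x : A) : G) = 1
        · rw [h1, hxy.mp h1]
        · have h2 : ρ ((y : A) : G) ≠ 1 := fun h => h1 (hxy.mpr h)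
          rw [(hmem x).resolve_left h1, (hmem y).resolve_left h2])
    rwa [Nat.card_eq_fintype_card (α := Bool), Fintype.card_bool] at h
  have hcyc : IsCyclic A := isCyclic_of_two (hG.to_subgroup A) hker
  have hcard := card_le_of_self_centralizing A hA
  obtain ⟨k, hk⟩ := IsPGroup.iff_card.mp (hG.to_subgroup A)
  rcases k with _ | k
  · rw [hk] at hcard
    simp at hcard
    exact le_trans hcard Nat.one_le_two_pow
  · obtain ⟨a, hagen⟩ := hcyc.exists_generator
    have hord : orderOf a = 2 ^ (k + 1) := by
      rw [orderOf_eq_card_of_forall_mem_zpowers hagen, hk]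
    have hk2 : 2 ^ k ≤ 2 * g := by
      rw [← hV]
      apply pow_le_of_negone (ρ a)
      rw [← map_pow]
      have hne : a ^ 2 ^ k ≠ 1 := by
        intro h
        have := Nat.le_of_dvd (by positivity) (orderOf_dvd_of_pow_eq_one h)
        rw [hord] at this
        exact absurd this (by rw [pow_succ]; have : 0 < 2 ^ k := by positivity
                              omega)
      have hin : (a : G) ^ 2 ^ k ∈ Z := by
        apply hΩZ
        refine ⟨A.pow_mem a.2 _, ?_⟩
        have h1 := pow_orderOf_eq_one a
        rw [hord, pow_succ, pow_mul, pow_two] at h1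
        exact congrArg Subtype.val h1
      rcases hin with h | h
      · exact absurd (Subtype.ext (hρ (h.trans (map_one ρ).symm))) hne
      · exact h
    rw [hk, Nat.totient_prime_pow Nat.prime_two (by omega)] at hcard
    simp only [Nat.add_sub_cancel] at hcard
    rcases Nat.lt_or_ge g 2 with hg2 | hg2
    · obtain rfl : g = 1 := by omega
      have hAtop : A = ⊤ := by
        rw [← hA, eq_top_iff]
        intro x _
        rw [mem_centralizer_iff]
        intro y _
        apply hρ
        rw [map_mul, map_mul]
        exact commute_of_dim_two J _ _ hJ hV (hJρ y) (hJρ x)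
      have hc2 : Nat.card G = 2 ^ (k + 1) := by
        rw [← hk, hAtop]; simp
      rw [hc2, pow_succ]
      have : expo 1 = 2 := by simp [expo]
      rw [this]; omega
    · have h2 : Nat.card G ≤ 2 ^ (2 * k + 1) := by
        refine hcard.trans (le_of_eq ?_)
        ring
      refine h2.trans (Nat.pow_le_pow_right (by norm_num) ?_)
      have hv : 1 ≤ padicValNat 2 g.factorial :=
        one_le_padicValNat_of_dvd (Nat.factorial_ne_zero g)
          ((Nat.prime_two.dvd_factorial).mpr hg2)
      unfold expo
      by_cases hk3 : k ≤ 2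
      · omega
      · have : 2 * (k + 1) ≤ 2 ^ k := by
          clear hcard hk hord hk2 h2
          induction k with
          | zero => omega
          | succ k ihk =>
            by_cases h : k ≤ 2
            · obtain rfl : k = 2 := by omega
              norm_num
            · have := ihk h
              rw [pow_succ]; omega
        omega

theorem bound_all : ∀ g, Bound g := by
  intro g
  induction g using Nat.strong_induction_on with
  | _ g ih =>
  intro G V _ _ _ _ _ ρ J hG hρ hJρ hJ hV
  by_cases hg : g = 0
  · subst hg
    have : Subsingleton V := (Module.finrank_zero_iff (R := ℚ)).mp (by simpa using hV)
    have : Subsingleton G := hρ.subsingleton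
    rw [Nat.card_of_subsingleton (1 : G)]
    exact Nat.one_le_two_pow
  · by_cases h : ∃ a : G, a * a = 1 ∧ ρ a ≠ 1 ∧ ρ a ≠ -1 ∧
      ∀ x, ρ (x * a * x⁻¹) = ρ a ∨ ρ (x * a * x⁻¹) = -ρ a
    · obtain ⟨a, h1, h2, h3, h4⟩ := h
      exact noncentral_case ih ρ J hG hρ hJρ hJ hV a h1 h2 h3 h4
    · push Not at h
      refine cyclic_case hg ρ J hG hρ hJρ hJ hV fun a h1 h2 h3 h4 => ?_
      obtain ⟨x, hx, hx'⟩ := h a h1 h2 h3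
      exact (h4 x).elim hx hx'

end TwoGroups
end
open Matrix

lemma exists_evenInv {ι G : Type} [Fintype ι] [DecidableEq ι] [Group G] [Finite G]
    (φ : G →* Matrix ι ι ℚ) (S : Matrix ι ι ℚ) (hS : Sᵀ = -S) (hSu : IsUnit S.det)
    (hφ : ∀ x, (φ x)ᵀ * S * φ x = S) :
    ∃ J : Matrix ι ι ℚ, (∀ x, φ x * J = J * φ x) ∧ EvenInv (Matrix.toLin' J) := by
  have := Fintype.ofFinite G
  let B : Matrix ι ι ℚ := ∑ x : G, (φ x)ᵀ * φ x
  have hBform : ∀ v : ι → ℚ, v ⬝ᵥ (B *ᵥ v) = ∑ x : G, (φ x *ᵥ v) ⬝ᵥ (φ x *ᵥ v) := by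
    intro v
    rw [Matrix.sum_mulVec, dotProduct_sum]
    refine Finset.sum_congr rfl fun x _ => ?_
    rw [← Matrix.mulVec_mulVec, Matrix.dotProduct_mulVec, Matrix.vecMul_transpose]
  have hBpos : ∀ v : ι → ℚ, v ⬝ᵥ (B *ᵥ v) = 0 → v = 0 := by
    intro v hv
    rw [hBform, Finset.sum_eq_zero_iff_of_nonneg (fun x _ => by
      exact Finset.sum_nonneg fun i _ => mul_self_nonneg _)] at hv
    have := hv 1 (Finset.mem_univ _)
    rwa [map_one, Matrix.one_mulVec, dotProduct_self_eq_zero] at this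
  have hBdet : IsUnit B.det := by
    rw [isUnit_iff_ne_zero]
    intro h0
    obtain ⟨v, hv, hBv⟩ := Matrix.exists_mulVec_eq_zero_iff.mpr h0
    exact hv (hBpos v (by rw [hBv, dotProduct_zero]))
  have hinv : ∀ x, φ x⁻¹ * φ x = 1 := fun x => by rw [← map_mul, inv_mul_cancel, map_one]
  have hinv' : ∀ x, φ x * φ x⁻¹ = 1 := fun x => by rw [← map_mul, mul_inv_cancel, map_one]
  have hB : ∀ x, B * φ x = (φ x⁻¹)ᵀ * B := by
    intro x
    have hr : (∑ y : G, (φ x⁻¹)ᵀ * ((φ y)ᵀ * φ y)) =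
        ∑ y : G, (φ x⁻¹)ᵀ * ((φ (y * x))ᵀ * φ (y * x)) :=
      (Equiv.sum_comp (Equiv.mulRight x) fun y => (φ x⁻¹)ᵀ * ((φ y)ᵀ * φ y)).symm
    simp only [B]
    rw [Finset.sum_mul, Finset.mul_sum, hr]
    refine Finset.sum_congr rfl fun y _ => ?_
    rw [← mul_assoc (φ x⁻¹)ᵀ, ← Matrix.transpose_mul, ← map_mul, mul_inv_cancel_right, map_mul,
      mul_assoc]
  have hSx : ∀ x, S * φ x = (φ x⁻¹)ᵀ * S := by
    intro x
    calc S * φ x = (φ x * φ x⁻¹)ᵀ * (S * φ x) := by rw [hinv', Matrix.transpose_one, one_mul]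
      _ = (φ x⁻¹)ᵀ * ((φ x)ᵀ * S * φ x) := by rw [Matrix.transpose_mul]; simp only [mul_assoc]
      _ = (φ x⁻¹)ᵀ * S := by rw [hφ]
  have hBB : B⁻¹ * B = 1 := Matrix.nonsing_inv_mul B hBdet
  have hBB' : B * B⁻¹ = 1 := Matrix.mul_nonsing_inv B hBdet
  refine ⟨B⁻¹ * S, fun x => ?_, ?_⟩
  · calc φ x * (B⁻¹ * S) = (B⁻¹ * B) * φ x * (B⁻¹ * S) := by rw [hBB, one_mul]
      _ = B⁻¹ * (B * φ x) * B⁻¹ * S := by simp only [mul_assoc]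
      _ = B⁻¹ * (φ x⁻¹)ᵀ * (B * B⁻¹) * S := by rw [hB]; simp only [mul_assoc]
      _ = B⁻¹ * (S * φ x) := by rw [hBB', hSx, mul_one, mul_assoc]
      _ = B⁻¹ * S * φ x := by rw [mul_assoc]
  · intro W hW
    by_contra hodd
    rw [Nat.not_even_iff_odd] at hodd
    let b := Module.finBasis ℚ W
    let P : Matrix ι (Fin (Module.finrank ℚ W)) ℚ := Matrix.of fun i j => (b j : ι → ℚ) i
    have hP : ∀ c, P *ᵥ c = ((b.equivFun.symm c : W) : ι → ℚ) := by
      intro c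
      rw [Module.Basis.equivFun_symm_apply]
      ext i
      simp [P, Matrix.mulVec, dotProduct, mul_comm]
    let M := Pᵀ * S * P
    have hM : Mᵀ = -M := by
      simp only [M, Matrix.transpose_mul, Matrix.transpose_transpose, hS]
      simp [Matrix.mul_assoc]
    have hdet : M.det = 0 := by
      have h := congrArg Matrix.det hM
      rw [Matrix.det_transpose, Matrix.det_neg, Fintype.card_fin, hodd.neg_one_pow] at h
      linarith
    obtain ⟨c, hc, hMc⟩ := Matrix.exists_mulVec_eq_zero_iff.mpr hdet
    let y : W := b.equivFun.symm c
    have hy : (y : ι → ℚ) ≠ 0 := by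
      intro h
      have : y = 0 := Subtype.ext h
      exact hc (b.equivFun.symm.map_eq_zero_iff.mp this)
    have horth : ∀ w : W, (w : ι → ℚ) ⬝ᵥ (S *ᵥ (y : ι → ℚ)) = 0 := by
      intro w
      have hw : P *ᵥ (b.equivFun w) = (w : ι → ℚ) := by rw [hP, LinearEquiv.symm_apply_apply]
      have hyc : P *ᵥ c = (y : ι → ℚ) := hP c
      have h0 : (b.equivFun w) ⬝ᵥ (M *ᵥ c) = 0 := by rw [hMc, dotProduct_zero]
      rw [← hw, ← hyc]
      rw [← h0]
      simp only [M]
      rw [← Matrix.mulVec_mulVec, ← Matrix.mulVec_mulVec, Matrix.dotProduct_mulVec _ Pᵀ,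
        Matrix.vecMul_transpose]
    have hJy := hW y y.2
    have h1 := horth ⟨_, hJy⟩
    simp only [Matrix.toLin'_apply] at h1
    have hSB : S *ᵥ (y : ι → ℚ) = B *ᵥ ((B⁻¹ * S) *ᵥ (y : ι → ℚ)) := by
      rw [Matrix.mulVec_mulVec, ← mul_assoc, hBB', one_mul]
    have h1' : ((B⁻¹ * S) *ᵥ (y : ι → ℚ)) ⬝ᵥ (B *ᵥ ((B⁻¹ * S) *ᵥ (y : ι → ℚ))) = 0 := by
      rw [← hSB]; exact h1
    have h2 := hBpos _ h1'
    rw [h2, Matrix.mulVec_zero] at hSB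
    exact hSu.ne_zero (Matrix.exists_mulVec_eq_zero_iff.mp ⟨_, hy, hSB⟩)

/-- Divisibility direction of the remark at the end of Section 3: the order of any
finite subgroup of `Sp(2g, ℚ)` divides
`2^{2g + ∑_{i≥1}⌊g/2^i⌋} · ∏_{odd primes p ≤ 2g+1} p^{∑_{i≥0}⌊2g/((p-1)p^i)⌋}`. -/
theorem finite_subgroup_Sp_card_dvd
    (g : ℕ) (hg : 1 ≤ g) (H : Subgroup (Matrix.symplecticGroup (Fin g) ℚ)) [Finite H] :
    Nat.card H ∣
      2 ^ (2 * g + ∑ i ∈ Finset.range (g + 1), g / 2 ^ (i + 1)) *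
        ∏ p ∈ (Finset.range (2 * g + 2)).filter (fun p => p.Prime ∧ Odd p),
          p ^ (∑ i ∈ Finset.range (2 * g + 1), 2 * g / ((p - 1) * p ^ i)) := by
  set R := 2 ^ (2 * g + ∑ i ∈ Finset.range (g + 1), g / 2 ^ (i + 1)) *
        ∏ p ∈ (Finset.range (2 * g + 2)).filter (fun p => p.Prime ∧ Odd p),
          p ^ (∑ i ∈ Finset.range (2 * g + 1), 2 * g / ((p - 1) * p ^ i)) with hR
  have hR0 : R ≠ 0 := by
    refine mul_ne_zero (by positivity) (Finset.prod_ne_zero_iff.mpr fun p hp => ?_)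
    exact pow_ne_zero _ (Finset.mem_filter.mp hp).2.1.ne_zero
  let φ : H →* Matrix (Fin g ⊕ Fin g) (Fin g ⊕ Fin g) ℚ :=
    (Matrix.symplecticGroup (Fin g) ℚ).subtype.comp H.subtype
  have hφ : Function.Injective φ := Subtype.val_injective.comp Subtype.val_injective
  let τ : Matrix (Fin g ⊕ Fin g) (Fin g ⊕ Fin g) ℚ →*
      ((Fin g ⊕ Fin g → ℚ) →ₗ[ℚ] (Fin g ⊕ Fin g → ℚ)) :=
    (Matrix.toLinAlgEquiv' : Matrix (Fin g ⊕ Fin g) (Fin g ⊕ Fin g) ℚ ≃ₐ[ℚ] _)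
  have hτ : Function.Injective τ := (Matrix.toLinAlgEquiv' (R := ℚ) (n := Fin g ⊕ Fin g)).injective
  have hτa : ∀ A v, τ A v = A *ᵥ v := fun A v => rfl
  have hfin : Module.finrank ℚ (Fin g ⊕ Fin g → ℚ) = 2 * g := by simp; ring
  rw [← Nat.factorization_prime_le_iff_dvd Nat.card_pos.ne' hR0]
  intro p hp
  have : Fact p.Prime := ⟨hp⟩
  obtain ⟨P⟩ : Nonempty (Sylow p H) := inferInstance
  have hPc : Nat.card P = p ^ (Nat.card H).factorization p := P.card_eq_multiplicity
  rw [← hp.pow_dvd_iff_le_factorization hR0]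
  set j := (Nat.card H).factorization p
  let ρ : P →* ((Fin g ⊕ Fin g → ℚ) →ₗ[ℚ] (Fin g ⊕ Fin g → ℚ)) :=
    τ.comp (φ.comp (P : Subgroup H).subtype)
  have hρ : Function.Injective ρ := hτ.comp (hφ.comp Subtype.val_injective)
  rcases hp.eq_two_or_odd' with rfl | hodd
  · obtain ⟨J, hJ1, hJ2⟩ := exists_evenInv (φ.comp (P : Subgroup H).subtype) (Matrix.J (Fin g) ℚ)
      (Matrix.J_transpose _ _) (Matrix.isUnit_det_J _ _)
      (fun x => SymplecticGroup.mem_iff'.mp (x : H).1.2)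
    have h := bound_all g P (Fin g ⊕ Fin g → ℚ) ρ (Matrix.toLin' J) P.isPGroup' hρ (by
      intro x v
      change (φ x) *ᵥ (J *ᵥ v) = J *ᵥ (φ x *ᵥ v)
      rw [Matrix.mulVec_mulVec, Matrix.mulVec_mulVec]
      congr 1
      exact hJ1 x) hJ2 hfin
    rw [hPc] at h
    have hj : j ≤ expo g := (Nat.pow_le_pow_iff_right (by norm_num)).mp h
    refine Dvd.dvd.mul_right (pow_dvd_pow 2 (hj.trans (le_of_eq ?_))) _
    unfold expo
    rw [padicValNat_factorial (b := g + 2) (by have := Nat.log_le_self 2 g; omega),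
      Finset.sum_Ico_eq_sum_range]
    simp [add_comm]
  · have h := schur_bound ρ hρ hp P.isPGroup'
    rw [hfin, hPc] at h
    have hp3 : 3 ≤ p := by
      have := hp.two_le
      rcases hodd with ⟨r, hr⟩; omega
    set M := 2 * g / (p - 1) with hM
    have hj : j ≤ M + padicValNat p M.factorial := by
      have h1 := (padicValNat_dvd_iff_le (p := p) (by
        exact mul_ne_zero (pow_ne_zero _ hp.ne_zero) (Nat.factorial_ne_zero _))).mp h
      rwa [padicValNat.mul (pow_ne_zero _ hp.ne_zero) (Nat.factorial_ne_zero _),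
        padicValNat.prime_pow] at h1
    have hM2 : M ≤ 2 * g := Nat.div_le_self _ _
    have hsum : M + padicValNat p M.factorial =
        ∑ i ∈ Finset.range (2 * g + 1), 2 * g / ((p - 1) * p ^ i) := by
      rw [padicValNat_factorial (b := 2 * g + 1) (by have := Nat.log_le_self p M; omega)]
      simp_rw [← Nat.div_div_eq_div_mul]
      rw [← hM, Finset.sum_Ico_eq_sum_range, Finset.sum_range_succ', add_comm]
      simp [add_comm]
    by_cases hple : p < 2 * g + 2
    · refine Dvd.dvd.mul_left ?_ _
      refine (pow_dvd_pow p (hj.trans hsum.le)).trans ?_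
      exact Finset.dvd_prod_of_mem (fun p => p ^ (∑ i ∈ Finset.range (2 * g + 1), 2 * g / ((p - 1) * p ^ i)))
        (Finset.mem_filter.mpr ⟨Finset.mem_range.mpr hple, hp, hodd⟩)
    · have hM0 : M = 0 := Nat.div_eq_of_lt (by omega)
      rw [hM0] at hj
      simp at hj
      rw [hj]; simp
end
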